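/- (Gaussian-comparison variance inequality for the whitened design.) Let R ∈ ℝ^{n×n} satisfy ||R||₂ ≤ 1, let u, u′ ∈ ℝ^n be unit vectors and w, w′ ∈ ℝ^p be unit vectors. Then ||R^⊤u w^⊤ − R^⊤u′ w′^⊤||_F² ≤ ||R^⊤(u − u′)||₂² + ||w − w′||₂². -/

import Mathlib

/-!
With `a = Rᵀu` and `b = Rᵀu'`, expanding the squares and using that `w`, `w'` are unit vectors, the
right-hand side minus the left-hand side is exactly `2 (1 - ⟨a, b⟩) (1 - ⟨w, w'⟩)`. Both factors are
nonnegative because `⟨x, y⟩ ≤ (‖x‖² + ‖y‖²) / 2`, once `‖a‖, ‖b‖ ≤ 1` is known. The latter says that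
the transpose of a contraction is a contraction on unit vectors (`transpose_sq_le_one`), by duality:
for `v = a / ‖a‖` one has `‖a‖ = ⟨a, v⟩ = ⟨u, R v⟩ ≤ 1`.
-/

open MeasureTheory ProbabilityTheory Finset

noncomputable section

/-- Euclidean (`ℓ₂`) norm of a finitely indexed real vector. -/
def l2 {m : Type*} [Fintype m] (v : m → ℝ) : ℝ := Real.sqrt (∑ i, v i ^ 2)

/-- `ℓ₁` norm of a finitely indexed real vector. -/
def l1 {m : Type*} [Fintype m] (v : m → ℝ) : ℝ := ∑ i, |v i|

/-- `ℓ∞` norm of a finitely indexed real vector. -/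
def linf {m : Type*} [Fintype m] (v : m → ℝ) : ℝ := ⨆ i, |v i|

/-- Matrix-vector multiplication for plain-function matrices. -/
def mvec {m k : Type*} [Fintype k] (M : m → k → ℝ) (v : k → ℝ) : m → ℝ :=
  fun i => ∑ j, M i j * v j

/-- Frobenius norm of a matrix. -/
def frob {m k : Type*} [Fintype m] [Fintype k] (M : m → k → ℝ) : ℝ :=
  Real.sqrt (∑ i, ∑ j, M i j ^ 2)

/-- `ℓ₂` operator norm of a matrix. -/
def opNorm {m k : Type*} [Fintype m] [Fintype k] (M : m → k → ℝ) : ℝ :=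
  sSup {x | ∃ v, l2 v ≤ 1 ∧ x = l2 (mvec M v)}

/-- The sub-Gaussian (ψ₂) norm `|||z|||₂ = inf {t > 0 | E[exp(z²/t²)] ≤ 2}`. -/
def sgNorm {Ω : Type*} [MeasurableSpace Ω] (μ : Measure Ω) (z : Ω → ℝ) : ℝ :=
  sInf {t | 0 < t ∧ (∫ ω, Real.exp (z ω ^ 2 / t ^ 2) ∂μ) ≤ 2}

/-- A random variable is sub-Gaussian if some `t > 0` witnesses `E[exp(z²/t²)] ≤ 2`. -/
def IsSubG {Ω : Type*} [MeasurableSpace Ω] (μ : Measure Ω) (z : Ω → ℝ) : Prop :=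
  ∃ t, 0 < t ∧ (∫ ω, Real.exp (z ω ^ 2 / t ^ 2) ∂μ) ≤ 2

/-- The scaling function `δ(n, r) = √(log r / n)`. -/
def sdelta (n r : ℝ) : ℝ := Real.sqrt (Real.log r / n)

/-- Restriction of a vector to a support set `S` (coordinates outside `S` set to zero). -/
def restr {p : ℕ} (S : Finset (Fin p)) (v : Fin p → ℝ) : Fin p → ℝ :=
  fun i => if i ∈ S then v i else 0

/-- The restricted-eigenvalue (RE) condition for `M` over the support `S` with
parameters `(κ, α)` : `(1/n)‖Mv‖₂² ≥ κ‖v‖₂²` for all `v` in the cone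
`C_α(S) = {v | ‖v_{S^⊥}‖₁ ≤ α ‖v_S‖₁}`. -/
def REcond {n p : ℕ} (M : Fin n → Fin p → ℝ) (S : Finset (Fin p)) (κ α : ℝ) : Prop :=
  ∀ v : Fin p → ℝ, l1 (restr Sᶜ v) ≤ α * l1 (restr S v) →
    (1 / (n : ℝ)) * l2 (mvec M v) ^ 2 ≥ κ * l2 v ^ 2

/-- The stationary AR(1) Cholesky factor `Ψ₀`: lower triangular, first column
`a (1, ρ, ρ², …, ρ^{n-1})ᵀ` with `a = (1 - ρ²)^{-1/2}`, and `(Ψ₀)_{ij} = ρ^{i-j}`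
for `2 ≤ j ≤ i ≤ n`. -/
def Psi0 (n : ℕ) (ρ : ℝ) : Fin n → Fin n → ℝ :=
  fun i j =>
    if (j : ℕ) = 0 then (Real.sqrt (1 - ρ ^ 2))⁻¹ * ρ ^ (i : ℕ)
    else if (j : ℕ) ≤ (i : ℕ) then ρ ^ ((i : ℕ) - (j : ℕ)) else 0

/-- The AR(1) whitening matrix built from the parameter `ρ`: `R₁₁ = (1-ρ²)^{1/2}`,
`R_tt = 1` for `t ≥ 2`, `R_{t,t-1} = -ρ`, zeros elsewhere. -/
def Rwhiten (n : ℕ) (ρ : ℝ) : Fin n → Fin n → ℝ :=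
  fun i j =>
    if i = j then (if (i : ℕ) = 0 then Real.sqrt (1 - ρ ^ 2) else 1)
    else if (i : ℕ) = (j : ℕ) + 1 then -ρ else 0

lemma l2_sq {m : Type*} [Fintype m] (v : m → ℝ) : l2 v ^ 2 = ∑ i, v i ^ 2 :=
  Real.sq_sqrt (Finset.sum_nonneg fun _ _ => sq_nonneg _)

lemma sum_mul_le_half {m : Type*} [Fintype m] (x y : m → ℝ) :
    ∑ i, x i * y i ≤ (∑ i, x i ^ 2 + ∑ i, y i ^ 2) / 2 := by
  rw [← Finset.sum_add_distrib, Finset.sum_div]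
  exact Finset.sum_le_sum fun i _ => by nlinarith [sq_nonneg (x i - y i)]

/-- The supremum defining `opNorm` is over a bounded set (bounded by the Frobenius norm), so it is
a genuine upper bound rather than the junk value `0`. -/
lemma l2_mvec_le_opNorm {m k : Type*} [Fintype m] [Fintype k] (M : m → k → ℝ) (v : k → ℝ)
    (hv : l2 v ≤ 1) : l2 (mvec M v) ≤ opNorm M := by
  refine le_csSup ⟨frob M, ?_⟩ ⟨v, hv, rfl⟩
  rintro _ ⟨x, hx, rfl⟩
  have hx2 : ∑ j, x j ^ 2 ≤ 1 := by
    rw [← l2_sq]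
    exact pow_le_one₀ (Real.sqrt_nonneg _) hx
  refine Real.sqrt_le_sqrt (Finset.sum_le_sum fun i _ => ?_)
  calc (∑ j, M i j * x j) ^ 2 ≤ (∑ j, M i j ^ 2) * ∑ j, x j ^ 2 :=
        Finset.sum_mul_sq_le_sq_mul_sq _ _ _
    _ ≤ ∑ j, M i j ^ 2 :=
        mul_le_of_le_one_right (Finset.sum_nonneg fun _ _ => sq_nonneg _) hx2

lemma transpose_sq_le_one {m k : Type*} [Fintype m] [Fintype k] (M : m → k → ℝ)
    (hM : opNorm M ≤ 1) (u : m → ℝ) (hu : l2 u = 1) :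
    ∑ i, (∑ l, M l i * u l) ^ 2 ≤ 1 := by
  set a : k → ℝ := fun i => ∑ l, M l i * u l with ha
  change ∑ i, a i ^ 2 ≤ 1
  rw [← l2_sq]
  have hs0 : 0 ≤ l2 a := Real.sqrt_nonneg _
  rcases hs0.eq_or_lt with h0 | hpos
  · rw [← h0]; norm_num
  refine pow_le_one₀ hs0 ?_
  let v : k → ℝ := fun i => a i / l2 a
  have hv2 : l2 v ^ 2 = 1 := by
    rw [l2_sq]
    simp only [v, div_pow]
    rw [← Finset.sum_div, ← l2_sq, div_self (pow_ne_zero 2 hpos.ne')]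
  have hv : l2 v ≤ 1 := (pow_le_one_iff_of_nonneg (Real.sqrt_nonneg _) two_ne_zero).1 hv2.le
  have hMv : ∑ l, mvec M v l ^ 2 ≤ 1 := by
    rw [← l2_sq]
    exact pow_le_one₀ (Real.sqrt_nonneg _) ((l2_mvec_le_opNorm M v hv).trans hM)
  have hu2 : ∑ l, u l ^ 2 = 1 := by rw [← l2_sq, hu, one_pow]
  have hdual : l2 a = ∑ l, u l * mvec M v l := by
    calc l2 a = ∑ i, a i * v i := by
          simp only [v, mul_div_assoc']
          rw [← Finset.sum_div, eq_div_iff hpos.ne', ← sq, l2_sq]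
          simp only [sq]
      _ = ∑ l, u l * mvec M v l := by
          simp only [ha, mvec, Finset.sum_mul, Finset.mul_sum]
          rw [Finset.sum_comm]
          exact Finset.sum_congr rfl fun l _ => Finset.sum_congr rfl fun i _ => by ring
  linarith [sum_mul_le_half u (mvec M v)]

/-- Gaussian-comparison variance inequality for the whitened design: if `‖R‖₂ ≤ 1` and
`u, u′`, `w, w′` are unit vectors, then
`‖R^⊤u w^⊤ − R^⊤u′ w′^⊤‖_F² ≤ ‖R^⊤(u − u′)‖₂² + ‖w − w′‖₂²`. -/
theorem gaussian_comparison_variance_inequality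
    (n p : ℕ) (R : Fin n → Fin n → ℝ) (u u' : Fin n → ℝ) (w w' : Fin p → ℝ)
    (hR : opNorm R ≤ 1)
    (hu : l2 u = 1) (hu' : l2 u' = 1) (hw : l2 w = 1) (hw' : l2 w' = 1) :
    frob (fun i j => (∑ k, R k i * u k) * w j - (∑ k, R k i * u' k) * w' j) ^ 2
      ≤ l2 (fun i => ∑ k, R k i * (u k - u' k)) ^ 2 + l2 (fun j => w j - w' j) ^ 2 := by
  have hA := transpose_sq_le_one R hR u hu
  have hB := transpose_sq_le_one R hR u' hu'
  have hw2 : ∑ j, w j ^ 2 = 1 := by rw [← l2_sq, hw, one_pow]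
  have hw2' : ∑ j, w' j ^ 2 = 1 := by rw [← l2_sq, hw', one_pow]
  have hfrob : ∀ M : Fin n → Fin p → ℝ, frob M ^ 2 = ∑ i, ∑ j, M i j ^ 2 := fun M =>
    Real.sq_sqrt (Finset.sum_nonneg fun _ _ => Finset.sum_nonneg fun _ _ => sq_nonneg _)
  rw [hfrob, l2_sq, l2_sq]
  simp only [mul_sub (R _ _), Finset.sum_sub_distrib (fun k => R k _ * u k)]
  set a : Fin n → ℝ := fun i => ∑ k, R k i * u k
  set b : Fin n → ℝ := fun i => ∑ k, R k i * u' k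
  change ∑ i, a i ^ 2 ≤ 1 at hA
  change ∑ i, b i ^ 2 ≤ 1 at hB
  change ∑ i, ∑ j, (a i * w j - b i * w' j) ^ 2
    ≤ ∑ i, (a i - b i) ^ 2 + ∑ j, (w j - w' j) ^ 2
  have expand : ∀ {m : ℕ} (x y : Fin m → ℝ), ∑ i, (x i - y i) ^ 2
      = ∑ i, x i ^ 2 + ∑ i, y i ^ 2 - 2 * ∑ i, x i * y i := fun x y => by
    rw [Finset.mul_sum, ← Finset.sum_add_distrib, ← Finset.sum_sub_distrib]
    exact Finset.sum_congr rfl fun i _ => by ring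
  have hL : ∑ i, ∑ j, (a i * w j - b i * w' j) ^ 2
      = ∑ i, a i ^ 2 + ∑ i, b i ^ 2 - 2 * ((∑ i, a i * b i) * ∑ j, w j * w' j) := by
    have hrow : ∀ i, ∑ j, (a i * w j - b i * w' j) ^ 2
        = a i ^ 2 + b i ^ 2 - 2 * (a i * b i * ∑ j, w j * w' j) := fun i => by
      rw [expand]
      simp only [mul_pow, mul_mul_mul_comm _ (w _), ← Finset.mul_sum, hw2, hw2', mul_one]
    simp only [hrow]
    rw [Finset.sum_sub_distrib, Finset.sum_add_distrib, ← Finset.mul_sum, ← Finset.sum_mul]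
  rw [hL, expand a b, expand w w', hw2, hw2']
  have hab : ∑ i, a i * b i ≤ 1 := by linarith [sum_mul_le_half a b]
  have hww : ∑ j, w j * w' j ≤ 1 := by linarith [sum_mul_le_half w w']
  nlinarith [mul_nonneg (sub_nonneg.2 hab) (sub_nonneg.2 hww)]

end
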